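/- Suppose a group G acts on a ring A from the right so that for each g ∈ G the map a ↦ a^g is a ring automorphism. Let m, n ≥ 0 with m + n ≥ 1, and let a, b ∈ A satisfy D^m a = 0 and D^n b = 0. Then D^{m+n-1}(ab) = 0. Equivalently, if a ∈ P_{m-1}(G,A) and b ∈ P_{n-1}(G,A) then ab ∈ P_{m+n-2}(G,A); in particular, the set P(G,A) = ∪_{k≥0} P_k(G,A) of all polynomial-like elements in A is a subring of A. -/

import Mathlib

/-- The iterated difference operator `D^n` associated with a right `G`-action
`act : A → G → A` on (the additive group of) a ring `A`. -/
def iterD {A G : Type*} [Ring A] [Group G] (act : A → G → A) :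
    (n : ℕ) → A → (Fin n → G) → A
  | 0, a, _ => a
  | n + 1, a, g =>
      act (iterD act n a (fun i => g i.castSucc)) (g (Fin.last n))
        - iterD act n a (fun i => g i.castSucc)

/-!
Peeling differences off at the first argument, `D^(n+1) a = 0` says that `D^n (a^g - a) = 0` for
every `g`. The product rule
`(ab)^g - ab = (a^g - a)(b^g - b) + (a^g - a)b + a(b^g - b)`
expresses the difference of `ab` through products in which at least one of the two vanishing orders
has dropped by one, and induction on these orders gives the bound for `ab`.
-/

section AddCommGroup

variable {ι A F : Type*} [AddCommGroup A] [FunLike F A A] [AddMonoidHomClass F A A] (φ : ι → F)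

/-- The kernel of the `n`-th iterated difference operator of a family `φ` of additive
endomorphisms. For the family of maps `a ↦ a^g` and `n ≥ 1` this is `P_{n-1}(G,A)`. It is defined
by applying the difference `a ↦ φ i a - a` first, whereas `iterD` adds new differences last. -/
def iterDiffKer : ℕ → AddSubgroup A
  | 0 => ⊥
  | n + 1 => ⨅ i, (iterDiffKer n).comap ((φ i : A →+ A) - AddMonoidHom.id A)

variable {φ}

theorem mem_iterDiffKer_zero {a : A} : a ∈ iterDiffKer φ 0 ↔ a = 0 :=
  AddSubgroup.mem_bot

theorem mem_iterDiffKer_succ {n : ℕ} {a : A} :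
    a ∈ iterDiffKer φ (n + 1) ↔ ∀ i, φ i a - a ∈ iterDiffKer φ n :=
  AddSubgroup.mem_iInf

theorem iterDiffKer_le_succ (n : ℕ) : iterDiffKer φ n ≤ iterDiffKer φ (n + 1) := by
  induction n with
  | zero => exact bot_le
  | succ n ih =>
    exact fun a ha ↦ mem_iterDiffKer_succ.2 fun i ↦ ih (mem_iterDiffKer_succ.1 ha i)

theorem iterDiffKer_mono : Monotone (iterDiffKer φ) :=
  monotone_nat_of_le_succ iterDiffKer_le_succ

end AddCommGroup

theorem map_mul_sub_mul_eq {A F : Type*} [NonUnitalNonAssocRing A] [FunLike F A A]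
    [MulHomClass F A A] (f : F) (a b : A) :
    f (a * b) - a * b = (f a - a) * (f b - b) + (f a - a) * b + a * (f b - b) := by
  simp only [map_mul, sub_mul, mul_sub]
  abel

theorem mul_mem_iterDiffKer {ι A F : Type*} [NonUnitalNonAssocRing A] [FunLike F A A]
    [NonUnitalRingHomClass F A A] {φ : ι → F} {m n : ℕ} {a b : A}
    (ha : a ∈ iterDiffKer φ m) (hb : b ∈ iterDiffKer φ n) :
    a * b ∈ iterDiffKer φ (m + n - 1) := by
  induction m generalizing n a b with
  | zero => simp only [mem_iterDiffKer_zero.1 ha, zero_mul, zero_mem]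
  | succ m ihm =>
    induction n generalizing a b with
    | zero => simp only [mem_iterDiffKer_zero.1 hb, mul_zero, zero_mem]
    | succ n ihn =>
      suffices a * b ∈ iterDiffKer φ (m + n + 1) from
        iterDiffKer_mono (by omega) this
      refine mem_iterDiffKer_succ.2 fun i ↦ ?_
      have hda : φ i a - a ∈ iterDiffKer φ m := mem_iterDiffKer_succ.1 ha i
      have hdb : φ i b - b ∈ iterDiffKer φ n := mem_iterDiffKer_succ.1 hb i
      rw [map_mul_sub_mul_eq]
      refine add_mem (add_mem ?_ ?_) ?_
      · exact iterDiffKer_mono (by omega) (ihm hda hdb)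
      · exact iterDiffKer_mono (by omega) (ihm hda hb)
      · exact iterDiffKer_mono (by omega) (ihn ha hdb)

section NonAssocRing

variable {ι A F : Type*} [NonAssocRing A] [FunLike F A A] [RingHomClass F A A]

theorem one_mem_iterDiffKer_one (φ : ι → F) : (1 : A) ∈ iterDiffKer φ 1 :=
  mem_iterDiffKer_succ.2 fun i ↦ by rw [map_one, sub_self]; exact zero_mem _

/-- The subring `⋃ k, P_k` of polynomial-like elements: those killed by some iterated difference
operator of the family `φ`. -/
def polynomialLikeSubring (φ : ι → F) : Subring A where
  carrier := {a | ∃ k, a ∈ iterDiffKer φ (k + 1)}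
  zero_mem' := ⟨0, zero_mem _⟩
  one_mem' := ⟨0, one_mem_iterDiffKer_one φ⟩
  neg_mem' := fun ⟨k, hk⟩ ↦ ⟨k, neg_mem hk⟩
  add_mem' := fun ⟨p, hp⟩ ⟨q, hq⟩ ↦
    ⟨p + q, add_mem (iterDiffKer_mono (by omega) hp) (iterDiffKer_mono (by omega) hq)⟩
  mul_mem' := fun ⟨p, hp⟩ ⟨q, hq⟩ ↦
    ⟨p + q, iterDiffKer_mono (by omega) (mul_mem_iterDiffKer hp hq)⟩

end NonAssocRing

section IterD

variable {A G : Type*} [Ring A] [Group G]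

theorem iterD_succ_eq_iterD_tail (act : A → G → A) (n : ℕ) (a : A) (g : Fin (n + 1) → G) :
    iterD act (n + 1) a g = iterD act n (act a (g 0) - a) (Fin.tail g) := by
  induction n with
  | zero => rfl
  | succ n ih => rw [iterD, ih]; rfl

theorem forall_iterD_eq_zero_iff {F : Type*} [FunLike F A A] [AddMonoidHomClass F A A]
    {φ : G → F} {n : ℕ} {a : A} :
    (∀ g : Fin n → G, iterD (fun x h ↦ φ h x) n a g = 0) ↔ a ∈ iterDiffKer φ n := by
  induction n generalizing a with
  | zero => simp only [iterD, forall_const, mem_iterDiffKer_zero]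
  | succ n ih =>
    simp only [Fin.forall_fin_succ_pi, iterD_succ_eq_iterD_tail, Fin.cons_zero, Fin.tail_cons, ih,
      mem_iterDiffKer_succ]

end IterD

theorem stmt_16_general {A G : Type*} [Ring A] [Group G] (φ : G → A →+* A) :
    (∀ (m n : ℕ), 1 ≤ m + n → ∀ a b : A,
        (∀ g : Fin m → G, iterD (fun x h ↦ φ h x) m a g = 0) →
        (∀ g : Fin n → G, iterD (fun x h ↦ φ h x) n b g = 0) →
        ∀ g : Fin (m + n - 1) → G, iterD (fun x h ↦ φ h x) (m + n - 1) (a * b) g = 0) ∧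
      (∀ (p q : ℕ) (a b : A),
        (∀ g : Fin (p + 1) → G, iterD (fun x h ↦ φ h x) (p + 1) a g = 0) →
        (∀ g : Fin (q + 1) → G, iterD (fun x h ↦ φ h x) (q + 1) b g = 0) →
        ∀ g : Fin (p + q + 1) → G, iterD (fun x h ↦ φ h x) (p + q + 1) (a * b) g = 0) ∧
      (∃ S : Subring A, ∀ x : A,
        x ∈ S ↔ ∃ k : ℕ, ∀ g : Fin (k + 1) → G,
          iterD (fun x h ↦ φ h x) (k + 1) x g = 0) := by
  simp only [forall_iterD_eq_zero_iff]
  refine ⟨fun m n _ a b ha hb ↦ mul_mem_iterDiffKer ha hb, fun p q a b ha hb ↦ ?_,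
    polynomialLikeSubring φ, fun x ↦ Iff.rfl⟩
  exact iterDiffKer_mono (by omega) (mul_mem_iterDiffKer ha hb)

/-- Suppose a group `G` acts on a ring `A` from the right by
ring automorphisms.  If `m + n ≥ 1`, `D^m a = 0` and `D^n b = 0`, then
`D^{m+n-1}(ab) = 0`.  Equivalently, `a ∈ P_{m-1}` and `b ∈ P_{n-1}` imply
`ab ∈ P_{m+n-2}` (stated below as: `a ∈ P_p`, `b ∈ P_q` imply `ab ∈ P_{p+q}`);
in particular the set `P(G,A) = ∪ₖ P_k(G,A)` of all polynomial-like elements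
of `A` is a subring of `A`. -/
theorem stmt_16 {A G : Type*} [Ring A] [Group G] (act : A → G → A)
    (hadd : ∀ (a b : A) (g : G), act (a + b) g = act a g + act b g)
    (hmul : ∀ (a b : A) (g : G), act (a * b) g = act a g * act b g)
    (hone' : ∀ g : G, act 1 g = 1)
    (hone : ∀ a : A, act a 1 = a)
    (hcomp : ∀ (a : A) (g h : G), act (act a g) h = act a (g * h)) :
    (∀ (m n : ℕ), 1 ≤ m + n → ∀ a b : A,
        (∀ g : Fin m → G, iterD act m a g = 0) →
        (∀ g : Fin n → G, iterD act n b g = 0) →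
        ∀ g : Fin (m + n - 1) → G, iterD act (m + n - 1) (a * b) g = 0) ∧
      (∀ (p q : ℕ) (a b : A),
        (∀ g : Fin (p + 1) → G, iterD act (p + 1) a g = 0) →
        (∀ g : Fin (q + 1) → G, iterD act (q + 1) b g = 0) →
        ∀ g : Fin (p + q + 1) → G, iterD act (p + q + 1) (a * b) g = 0) ∧
      (∃ S : Subring A, ∀ x : A,
        x ∈ S ↔ ∃ k : ℕ, ∀ g : Fin (k + 1) → G, iterD act (k + 1) x g = 0) :=
  stmt_16_general fun g ↦
    RingHom.mk' ⟨⟨(act · g), hone' g⟩, fun a b ↦ hmul a b g⟩ fun a b ↦ hadd a b g
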